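/- Let N be odd, α ∈ ℝ with α ≠ 1, and set α' = (α+3)/(α−1). Suppose v, w ∈ V_N are nonzero vectors such that H(α) v = E(α) v, H(α') w = E(α') w, both v(μ) = 0 and w(μ) = 0 whenever n₊(μ) is odd, w(−) ≠ 0 where (−) is the all-minus configuration, and the eigenspace {u ∈ V_N : H(α') u = E(α') u} has complex dimension exactly 2. Then the sum rule (Σ_μ v(μ)) · (Σ_μ w(μ)) = 2^{N−1} · v(−) · w(−) holds, where both sums run over all 2^N configurations. -/

import Mathlib

open Finset

/-- Spin configurations of length `N`: maps `ℤ/N → {−1,+1}` (spins encoded as units of `ℤ`). -/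
abbrev Config (N : ℕ) : Type := ZMod N → ℤˣ

/-- The state space `V_N`: complex-valued functions on configurations. -/
abbrev StateSpace (N : ℕ) : Type := Config N → ℂ

/-- The spin value `μ_j` as a complex number (`+1` or `−1`). -/
def spin {N : ℕ} (μ : Config N) (j : ZMod N) : ℂ := ((μ j : ℤ) : ℂ)

/-- Flip the spin at site `j`. -/
def flipAt {N : ℕ} (μ : Config N) (j : ZMod N) : Config N :=
  Function.update μ j (-(μ j))

/-- `μ^{(j,j+1)}`: the configuration `μ` with the spins at sites `j` and `j+1` (mod `N`) flipped. -/
def flipPair {N : ℕ} (μ : Config N) (j : ZMod N) : Config N :=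
  flipAt (flipAt μ j) (j + 1)

/-- The periodic XYZ Hamiltonian with real couplings `Jx, Jy, Jz`:
`(H Ψ)(μ) = −(1/2) Σ_j [(Jx − Jy μ_j μ_{j+1}) Ψ(μ^{(j,j+1)}) + Jz μ_j μ_{j+1} Ψ(μ)]`. -/
noncomputable def Hxyz (N : ℕ) [NeZero N] (Jx Jy Jz : ℝ) (Ψ : StateSpace N) : StateSpace N :=
  fun μ => -(1/2 : ℂ) * ∑ j : ZMod N,
    (((Jx : ℂ) - (Jy : ℂ) * spin μ j * spin μ (j + 1)) * Ψ (flipPair μ j)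
      + (Jz : ℂ) * spin μ j * spin μ (j + 1) * Ψ μ)

/-- `n₊(μ)`: the number of sites `j` with `μ_j = +1`. -/
def nPlus {N : ℕ} [NeZero N] (μ : Config N) : ℕ :=
  (Finset.univ.filter (fun j => μ j = 1)).card

/-- `H(α)`: the XYZ Hamiltonian with `Jx = 1+α`, `Jy = 1−α`, `Jz = (α²−1)/2`. -/
noncomputable def Halpha (N : ℕ) [NeZero N] (α : ℝ) : StateSpace N → StateSpace N :=
  Hxyz N (1 + α) (1 - α) ((α ^ 2 - 1) / 2)

/-- `E(α) = −(N/4)(3 + α²)`. -/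
noncomputable def Eval (N : ℕ) (α : ℝ) : ℝ := -(N / 4 : ℝ) * (3 + α ^ 2)

/-- The periodic XYZ Hamiltonian as a linear operator on `V_N`. -/
noncomputable def HxyzL (N : ℕ) [NeZero N] (Jx Jy Jz : ℝ) : Module.End ℂ (StateSpace N) where
  toFun := Hxyz N Jx Jy Jz
  map_add' Ψ Φ := by
    funext μ
    simp only [Hxyz, Pi.add_apply, mul_add, add_mul, Finset.sum_add_distrib]
    ring
  map_smul' c Ψ := by
    funext μ
    simp only [Hxyz, Pi.smul_apply, smul_eq_mul, RingHom.id_apply, mul_add, add_mul,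
      Finset.mul_sum, Finset.sum_add_distrib]
    congr 1 <;> exact Finset.sum_congr rfl (fun j _ => by ring)

/-- `H(α)` as a linear operator on `V_N`. -/
noncomputable def HalphaL (N : ℕ) [NeZero N] (α : ℝ) : Module.End ℂ (StateSpace N) :=
  HxyzL N (1 + α) (1 - α) ((α ^ 2 - 1) / 2)

theorem spin_mul_self {N : ℕ} (μ : Config N) (j : ZMod N) : spin μ j * spin μ j = 1 := by
  rcases Int.units_eq_one_or (μ j) with h | h <;> simp [spin, h]

theorem spin_neg {N : ℕ} (μ : Config N) (j : ZMod N) : spin (-μ) j = -spin μ j := by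
  simp [spin]

theorem flipAt_flipAt_self {N : ℕ} (μ : Config N) (j : ZMod N) :
    flipAt (flipAt μ j) j = μ := by
  simp [flipAt]

theorem flipAt_comm {N : ℕ} (μ : Config N) (i j : ZMod N) :
    flipAt (flipAt μ i) j = flipAt (flipAt μ j) i := by
  rcases eq_or_ne i j with rfl | h
  · rfl
  · simp only [flipAt, Function.update_of_ne h, Function.update_of_ne h.symm]
    exact Function.update_comm h _ _ _

theorem flipAt_neg {N : ℕ} (μ : Config N) (j : ZMod N) : flipAt (-μ) j = -flipAt μ j := by
  funext i
  rcases eq_or_ne i j with rfl | h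
  · simp [flipAt]
  · simp [flipAt, h]

theorem flipPair_neg {N : ℕ} (μ : Config N) (j : ZMod N) : flipPair (-μ) j = -flipPair μ j := by
  simp only [flipPair, flipAt_neg]

theorem flipPair_involutive {N : ℕ} (j : ZMod N) :
    Function.Involutive fun μ : Config N => flipPair μ j := fun μ => by
  simp only [flipPair]
  rw [flipAt_comm (flipAt μ j), flipAt_flipAt_self, flipAt_flipAt_self]

theorem spin_flipAt_self {N : ℕ} (μ : Config N) (j : ZMod N) :
    spin (flipAt μ j) j = -spin μ j := by
  simp [spin, flipAt]

theorem spin_flipAt_of_ne {N : ℕ} (μ : Config N) {i j : ZMod N} (h : i ≠ j) :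
    spin (flipAt μ j) i = spin μ i := by
  simp [spin, flipAt, h]

theorem spin_mul_spin_flipPair {N : ℕ} (μ : Config N) (j : ZMod N) :
    spin (flipPair μ j) j * spin (flipPair μ j) (j + 1) = spin μ j * spin μ (j + 1) := by
  rcases eq_or_ne j (j + 1) with h | h
  · rw [← h, spin_mul_self, spin_mul_self]
  · rw [flipPair, spin_flipAt_of_ne _ h, spin_flipAt_self, spin_flipAt_self,
      spin_flipAt_of_ne _ h.symm, neg_mul_neg]

/-- The sign `∏ j, μ_j` of a configuration. -/
noncomputable def spinProd {N : ℕ} [NeZero N] (μ : Config N) : ℂ := ∏ j, spin μ j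

theorem spinProd_eq_neg_one_of_even {N : ℕ} [NeZero N] (hN : Odd N) {μ : Config N}
    (hμ : Even (nPlus μ)) : spinProd μ = -1 := by
  have hs : ∀ j, spin μ j = if μ j = 1 then 1 else -1 := fun j => by
    rcases Int.units_eq_one_or (μ j) with h | h <;> simp [spin, h]
  have hcard := Finset.card_filter_add_card_filter_not
    (s := (Finset.univ : Finset (ZMod N))) (fun j => μ j = 1)
  rw [Finset.card_univ, ZMod.card] at hcard
  simp only [spinProd, hs, Finset.prod_ite, Finset.prod_const_one, Finset.prod_const, one_mul]
  apply Odd.neg_one_pow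
  rw [← hcard] at hN
  exact (Nat.odd_add'.mp hN).mpr hμ

theorem spinProd_neg {N : ℕ} [NeZero N] (hN : Odd N) (μ : Config N) :
    spinProd (-μ) = -spinProd μ := by
  simp only [spinProd, spin_neg, Finset.prod_neg, Finset.card_univ, ZMod.card]
  rw [hN.neg_one_pow, neg_one_mul]

/-- A vector supported on even `n₊` picks up the sign `-1` under multiplication by `spinProd`. -/
theorem spinProd_mul_of_even_support {N : ℕ} [NeZero N] (hN : Odd N) {f : StateSpace N}
    (hf : ∀ μ : Config N, Odd (nPlus μ) → f μ = 0) (μ : Config N) :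
    spinProd μ * f μ = -f μ := by
  rcases Nat.even_or_odd (nPlus μ) with h | h
  · rw [spinProd_eq_neg_one_of_even hN h, neg_one_mul]
  · simp [hf μ h]

/-- The kernel of the unnormalized Hadamard transform on every site. -/
noncomputable def hadamardKernel {N : ℕ} [NeZero N] (μ ν : Config N) : ℂ :=
  ∏ j, if μ j = 1 then 1 else spin ν j

theorem hadamardKernel_comm {N : ℕ} [NeZero N] (μ ν : Config N) :
    hadamardKernel μ ν = hadamardKernel ν μ := by
  refine Finset.prod_congr rfl fun j _ => ?_
  rcases Int.units_eq_one_or (μ j) with h | h <;>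
    rcases Int.units_eq_one_or (ν j) with h' | h' <;> simp [spin, h, h']

theorem hadamardKernel_flipAt_left {N : ℕ} [NeZero N] (μ ν : Config N) (j : ZMod N) :
    hadamardKernel (flipAt μ j) ν = spin ν j * hadamardKernel μ ν := by
  unfold hadamardKernel
  rw [← Finset.mul_prod_erase _ _ (Finset.mem_univ j),
    ← Finset.mul_prod_erase Finset.univ (fun i => if μ i = 1 then 1 else spin ν i)
      (Finset.mem_univ j), ← mul_assoc]
  congr 1
  · rcases Int.units_eq_one_or (μ j) with h | h <;> simp [flipAt, h, spin_mul_self]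
  · refine Finset.prod_congr rfl fun i hi => ?_
    simp [flipAt, Finset.ne_of_mem_erase hi]

theorem hadamardKernel_flipPair_left {N : ℕ} [NeZero N] (μ ν : Config N) (j : ZMod N) :
    hadamardKernel (flipPair μ j) ν = spin ν j * spin ν (j + 1) * hadamardKernel μ ν := by
  rw [flipPair, hadamardKernel_flipAt_left, hadamardKernel_flipAt_left]
  ring

theorem hadamardKernel_flipPair_right {N : ℕ} [NeZero N] (μ ν : Config N) (j : ZMod N) :
    hadamardKernel μ (flipPair ν j) = spin μ j * spin μ (j + 1) * hadamardKernel μ ν := by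
  rw [hadamardKernel_comm, hadamardKernel_flipPair_left, hadamardKernel_comm]

/-- The unnormalized Hadamard transform on every site. -/
noncomputable def hadamard {N : ℕ} [NeZero N] (f : StateSpace N) : StateSpace N :=
  fun μ => ∑ ν, hadamardKernel μ ν * f ν

theorem hadamard_smul {N : ℕ} [NeZero N] (c : ℂ) (f : StateSpace N) :
    hadamard (c • f) = c • hadamard f := by
  funext μ
  simp only [hadamard, Pi.smul_apply, smul_eq_mul, Finset.mul_sum]
  exact Finset.sum_congr rfl fun ν _ => by ring

theorem hadamard_allPlus {N : ℕ} [NeZero N] (f : StateSpace N) :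
    hadamard f (fun _ => 1) = ∑ μ, f μ := by
  simp [hadamard, hadamardKernel]

/-- The Hadamard transform exchanges the couplings `Jx` and `Jz`. -/
theorem Hxyz_hadamard {N : ℕ} [NeZero N] (Jx Jy Jz : ℝ) (f : StateSpace N) :
    Hxyz N Jz Jy Jx (hadamard f) = hadamard (Hxyz N Jx Jy Jz f) := by
  funext μ
  have hbond : ∀ j : ZMod N,
      ((Jz : ℂ) - Jy * spin μ j * spin μ (j + 1)) * hadamard f (flipPair μ j)
        + (Jx : ℂ) * spin μ j * spin μ (j + 1) * hadamard f μ
      = ∑ ν, hadamardKernel μ ν * (((Jx : ℂ) - Jy * spin ν j * spin ν (j + 1)) * f (flipPair ν j)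
        + (Jz : ℂ) * spin ν j * spin ν (j + 1) * f ν) := by
    intro j
    have hreindex :
        ∑ ν, hadamardKernel μ ν * (((Jx : ℂ) - Jy * spin ν j * spin ν (j + 1)) * f (flipPair ν j))
        = ∑ ν, spin μ j * spin μ (j + 1) * hadamardKernel μ ν *
          (((Jx : ℂ) - Jy * spin ν j * spin ν (j + 1)) * f ν) := by
      refine Fintype.sum_equiv (flipPair_involutive j).toPerm _ _ fun ν => ?_
      rw [Function.Involutive.coe_toPerm, hadamardKernel_flipPair_right,
        mul_assoc (Jy : ℂ) (spin _ j), mul_assoc (Jy : ℂ) (spin _ j), spin_mul_spin_flipPair]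
      linear_combination (-(spin μ (j + 1) * spin μ (j + 1) * hadamardKernel μ ν *
          ((Jx - Jy * (spin ν j * spin ν (j + 1))) * f (flipPair ν j)))) * spin_mul_self μ j
        - (hadamardKernel μ ν *
          ((Jx - Jy * (spin ν j * spin ν (j + 1))) * f (flipPair ν j))) * spin_mul_self μ (j + 1)
    simp only [mul_add, Finset.sum_add_distrib]
    rw [hreindex]
    simp only [hadamard, Finset.mul_sum, ← Finset.sum_add_distrib, hadamardKernel_flipPair_left]
    exact Finset.sum_congr rfl fun ν _ => by ring
  simp only [Hxyz, hbond]
  rw [Finset.sum_comm]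
  simp only [hadamard, Hxyz, Finset.mul_sum]
  exact Finset.sum_congr rfl fun ν _ => Finset.sum_congr rfl fun j _ => by ring

theorem Hxyz_comp_neg {N : ℕ} [NeZero N] (Jx Jy Jz : ℝ) (f : StateSpace N) :
    Hxyz N Jx Jy Jz (fun μ => f (-μ)) = fun μ => Hxyz N Jx Jy Jz f (-μ) := by
  funext μ
  simp only [Hxyz, flipPair_neg, spin_neg, mul_neg, neg_mul, neg_neg]

theorem Hxyz_scale {N : ℕ} [NeZero N] (s Jx Jy Jz : ℝ) (f : StateSpace N) :
    Hxyz N (s * Jx) (s * Jy) (s * Jz) f = (s : ℂ) • Hxyz N Jx Jy Jz f := by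
  funext μ
  simp only [Hxyz, Pi.smul_apply, smul_eq_mul, Finset.mul_sum, Complex.ofReal_mul]
  exact Finset.sum_congr rfl fun j _ => by ring

/-- The Hadamard transform maps the `E(α)`-eigenvectors of `H(α)` to `E(β)`-eigenvectors of
`H(β)`, where `β = (α + 3) / (α - 1)`. -/
theorem Halpha_hadamard {N : ℕ} [NeZero N] {α : ℝ} (hα : α ≠ 1) {v : StateSpace N}
    (hv : Halpha N α v = ((Eval N α : ℝ) : ℂ) • v) :
    Halpha N ((α + 3) / (α - 1)) (hadamard v)
      = ((Eval N ((α + 3) / (α - 1)) : ℝ) : ℂ) • hadamard v := by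
  have h1 : α - 1 ≠ 0 := sub_ne_zero.mpr hα
  have hx : 1 + (α + 3) / (α - 1) = 4 / (α - 1) ^ 2 * ((α ^ 2 - 1) / 2) := by
    field_simp
    ring
  have hy : 1 - (α + 3) / (α - 1) = 4 / (α - 1) ^ 2 * (1 - α) := by
    field_simp
    ring
  have hz : (((α + 3) / (α - 1)) ^ 2 - 1) / 2 = 4 / (α - 1) ^ 2 * (1 + α) := by
    field_simp
    ring
  have hE : Eval N ((α + 3) / (α - 1)) = 4 / (α - 1) ^ 2 * Eval N α := by
    unfold Eval
    field_simp
    ring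
  rw [Halpha] at hv ⊢
  rw [hx, hy, hz, Hxyz_scale, Hxyz_hadamard, hv, hadamard_smul, smul_smul, hE, Complex.ofReal_mul]

/-- Hadamard inversion at the all-minus configuration. -/
theorem sum_spinProd_mul_hadamard {N : ℕ} [NeZero N] (f : StateSpace N) :
    ∑ μ, spinProd μ * hadamard f μ = 2 ^ N * f (fun _ => -1) := by
  have hker : ∀ ν : Config N, ∑ μ, spinProd μ * hadamardKernel μ ν
      = ∏ j, if ν j = -1 then (2 : ℂ) else 0 := by
    intro ν
    have hsite : ∀ j, (if ν j = -1 then (2 : ℂ) else 0)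
        = ∑ a : ℤˣ, ((a : ℤ) : ℂ) * if a = 1 then 1 else spin ν j := fun j => by
      rcases Int.units_eq_one_or (ν j) with h | h <;>
        norm_num [spin, h, UnitsInt.univ]
    simp only [hsite, Finset.prod_univ_sum, Fintype.piFinset_univ, spinProd, hadamardKernel,
      ← Finset.prod_mul_distrib]
    rfl
  simp only [hadamard, Finset.mul_sum, ← mul_assoc]
  rw [Finset.sum_comm]
  simp only [← Finset.sum_mul, hker]
  rw [Finset.sum_eq_single fun _ => -1]
  · simp
  · intro ν _ hν
    obtain ⟨j, hj⟩ := Function.ne_iff.mp hν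
    rw [Finset.prod_eq_zero (Finset.mem_univ j) (if_neg hj), zero_mul]
  · simp

theorem nPlus_allPlus {N : ℕ} [NeZero N] : nPlus (fun _ : ZMod N => (1 : ℤˣ)) = N := by
  simp [nPlus]

theorem mem_eigenspace_HalphaL {N : ℕ} [NeZero N] {α : ℝ} {c : ℂ} {f : StateSpace N}
    (hf : Halpha N α f = c • f) : f ∈ Module.End.eigenspace (HalphaL N α) c :=
  Module.End.mem_eigenspace_iff.mpr hf

theorem mem_span_pair_of_finrank_eq_two {K V : Type*} [Field K] [AddCommGroup V] [Module K V]
    {S : Submodule K V} (hS : Module.finrank K S = 2) {x y z : V} (hx : x ∈ S) (hy : y ∈ S)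
    (hz : z ∈ S) (hxy : LinearIndependent K ![x, y]) : ∃ a b : K, a • x + b • y = z := by
  have : FiniteDimensional K S := Module.finite_of_finrank_pos (by omega)
  have hspan : Submodule.span K (Set.range ![x, y]) = S := by
    refine Submodule.eq_of_le_of_finrank_eq ?_ ?_
    · rw [Submodule.span_le]
      rintro _ ⟨i, rfl⟩
      fin_cases i <;> simpa
    · rw [finrank_span_eq_card hxy, hS, Fintype.card_fin]
  rw [← hspan, Matrix.range_cons_cons_empty] at hz
  exact Submodule.mem_span_pair.mp hz

/-- The linear sum rule `(Σ_μ v(μ)) (Σ_μ w(μ)) = 2^{N−1} v(−⋯−) w(−⋯−)`. -/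
theorem linear_sum_rule (N : ℕ) [NeZero N]
    (hN : Odd N) (α : ℝ) (hα : α ≠ 1)
    (v w : StateSpace N) (hv0 : v ≠ 0) (hw0 : w ≠ 0)
    (hv : Halpha N α v = ((Eval N α : ℝ) : ℂ) • v)
    (hw : Halpha N ((α + 3) / (α - 1)) w = ((Eval N ((α + 3) / (α - 1)) : ℝ) : ℂ) • w)
    (hvpar : ∀ μ : Config N, Odd (nPlus μ) → v μ = 0)
    (hwpar : ∀ μ : Config N, Odd (nPlus μ) → w μ = 0)
    (hwm : w (fun _ => -1) ≠ 0)
    (hdim : Module.finrank ℂ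
      (Module.End.eigenspace (HalphaL N ((α + 3) / (α - 1)))
        ((Eval N ((α + 3) / (α - 1)) : ℝ) : ℂ)) = 2) :
    (∑ μ : Config N, v μ) * (∑ μ : Config N, w μ)
      = 2 ^ (N - 1) * v (fun _ => -1) * w (fun _ => -1) := by
  set β := (α + 3) / (α - 1)
  have hwp : w (fun _ => 1) = 0 := hwpar _ (by rwa [nPlus_allPlus])
  have hneg : (-fun _ => 1 : Config N) = fun _ => -1 := rfl
  have hneg' : (-fun _ => -1 : Config N) = fun _ => 1 := by funext; simp
  have hR : Halpha N β (fun μ => w (-μ)) = ((Eval N β : ℝ) : ℂ) • fun μ => w (-μ) := by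
    rw [Halpha] at hw ⊢
    rw [Hxyz_comp_neg, hw]
    rfl
  have hli : LinearIndependent ℂ ![w, fun μ => w (-μ)] := by
    refine LinearIndependent.pair_iff.mpr fun a b hab => ⟨?_, ?_⟩
    · simpa [hneg', hwp, hwm] using congrFun hab fun _ => -1
    · simpa [hneg, hwp, hwm] using congrFun hab fun _ => 1
  obtain ⟨a, b, hab⟩ := mem_span_pair_of_finrank_eq_two hdim
    (mem_eigenspace_HalphaL hw) (mem_eigenspace_HalphaL hR)
    (mem_eigenspace_HalphaL (Halpha_hadamard hα hv)) hli
  have hsum : ∑ μ, v μ = b * w (fun _ => -1) := by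
    rw [← hadamard_allPlus, ← hab]
    simp [hneg, hwp]
  have hsum' : -∑ μ, v μ = a * w (fun _ => -1) := by
    have hminus : hadamard v (fun _ => -1) = -∑ μ, v μ := by
      rw [← Finset.sum_neg_distrib]
      refine Finset.sum_congr rfl fun ν _ => ?_
      rw [← spinProd_mul_of_even_support hN hvpar]
      simp [hadamardKernel, spinProd]
    rw [← hminus, ← hab]
    simp [hneg', hwp]
  have hw_sum : ∑ μ, spinProd μ * w μ = -∑ μ, w μ := by
    simp only [spinProd_mul_of_even_support hN hwpar, Finset.sum_neg_distrib]
  have hR_sum : ∑ μ, spinProd μ * w (-μ) = ∑ μ, w μ := by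
    refine Fintype.sum_equiv (Equiv.neg (Config N)) _ _ fun μ => ?_
    have h := spinProd_mul_of_even_support hN hwpar (-μ)
    rw [spinProd_neg hN] at h
    rw [Equiv.neg_apply]
    linear_combination -h
  have hinv := sum_spinProd_mul_hadamard v
  have hexpand : ∑ μ, spinProd μ * hadamard v μ
      = a * ∑ μ, spinProd μ * w μ + b * ∑ μ, spinProd μ * w (-μ) := by
    rw [← hab, Finset.mul_sum, Finset.mul_sum, ← Finset.sum_add_distrib]
    refine Finset.sum_congr rfl fun μ _ => ?_
    simp only [Pi.add_apply, Pi.smul_apply, smul_eq_mul]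
    ring
  rw [hexpand, hw_sum, hR_sum, ← mul_pow_sub_one (NeZero.ne N)] at hinv
  linear_combination (1 / 2 : ℂ) * w (fun _ => -1) * hinv
    + (1 / 2 : ℂ) * (∑ μ, w μ) * hsum - (1 / 2 : ℂ) * (∑ μ, w μ) * hsum'
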